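/- Let l ≠ 0 be real and let a, b, c, d be real-valued differentiable functions on an interval J solving the system (Q): a' = −a² − bc + lc, b' = −(a+d)b + ld, c' = −(a+d)c − la, d' = −d² − bc − lb, and suppose a(t)d(t) − b(t)c(t) ≠ 0 on J. Then the function V := [a² + d² + (b − (ad − bc)/l)² + (c + (ad − bc)/l)²] / (ad − bc)² is constant along the solution, i.e., t ↦ V(a(t), b(t), c(t), d(t)) is constant on J. -/

import Mathlib

/-!
In matrix form (Q) reads `Q' = -Q² - AQ` with `A = lL` skew. Inversion linearizes it: `P = Q⁻¹`
satisfies `P' = 1 + PA`, whose equilibrium is `-A⁻¹`. Shifting it to the origin, `R = P + A⁻¹`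
satisfies `R' = RA`, so `R` moves by right multiplication with orthogonal matrices and `RR*` is
constant. The Lyapunov function is `tr (RR*)`, the squared Frobenius norm of `Q⁻¹ + A⁻¹`.
-/

open Matrix
open scoped Matrix.Norms.Frobenius Ring

theorem hasDerivWithinAt_ringInverse_of_riccati {𝕜 R : Type*} [NontriviallyNormedField 𝕜]
    [NormedRing R] [NormedAlgebra 𝕜 R] [HasSummableGeomSeries R] {Q : 𝕜 → R} {A : R} {s : Set 𝕜}
    {t : 𝕜} (hQ : HasDerivWithinAt Q (-Q t ^ 2 - A * Q t) s t) (hunit : IsUnit (Q t)) :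
    HasDerivWithinAt (fun τ ↦ (Q τ)⁻¹ʳ) (1 + (Q t)⁻¹ʳ * A) s t := by
  obtain ⟨u, hu⟩ := hunit
  have hinv : HasFDerivAt Ring.inverse _ (Q t) := hu ▸ hasFDerivAt_ringInverse (𝕜 := 𝕜) u
  refine (hinv.comp_hasDerivWithinAt t hQ).congr_deriv ?_
  simp [← hu, sq, mul_sub, sub_mul, mul_assoc, add_comm]

theorem hasDerivWithinAt_mul_star_self_of_skew {𝕜 R : Type*} [NontriviallyNormedField 𝕜]
    [StarRing 𝕜] [TrivialStar 𝕜] [NormedRing R] [NormedAlgebra 𝕜 R] [StarRing R] [StarModule 𝕜 R]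
    [ContinuousStar R] {P : 𝕜 → R} {A : R} {s : Set 𝕜} {t : 𝕜}
    (hP : HasDerivWithinAt P (P t * A) s t) (hA : star A = -A) :
    HasDerivWithinAt (fun τ ↦ P τ * star (P τ)) 0 s t :=
  (hP.fun_mul hP.star).congr_deriv (by simp [hA, mul_assoc])

theorem eq_of_hasDerivWithinAt_zero_of_convex {E : Type*} [NormedAddCommGroup E] [NormedSpace ℝ E]
    {f : ℝ → E} {s : Set ℝ} (hs : Convex ℝ s) (hf : ∀ t ∈ s, HasDerivWithinAt f 0 s t) {x y : ℝ}
    (hx : x ∈ s) (hy : y ∈ s) : f x = f y := by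
  have hbound : ‖f x - f y‖ ≤ 0 * ‖x - y‖ :=
    hs.norm_image_sub_le_of_norm_hasDerivWithin_le hf (fun _ _ ↦ norm_zero.le) hy hx
  rwa [zero_mul, norm_le_zero_iff, sub_eq_zero] at hbound

theorem ringInverse_add_mul_star_self_eq_of_riccati {R : Type*} [NormedRing R] [NormedAlgebra ℝ R]
    [HasSummableGeomSeries R] [StarRing R] [StarModule ℝ R] [ContinuousStar R] {Q : ℝ → R}
    {A B : R} {s : Set ℝ} (hs : Convex ℝ s) (hA : star A = -A) (hBA : B * A = 1)
    (hQ : ∀ t ∈ s, HasDerivWithinAt Q (-Q t ^ 2 - A * Q t) s t) (hunit : ∀ t ∈ s, IsUnit (Q t))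
    {x y : ℝ} (hx : x ∈ s) (hy : y ∈ s) :
    ((Q x)⁻¹ʳ + B) * star ((Q x)⁻¹ʳ + B) = ((Q y)⁻¹ʳ + B) * star ((Q y)⁻¹ʳ + B) := by
  refine eq_of_hasDerivWithinAt_zero_of_convex (f := fun t ↦ ((Q t)⁻¹ʳ + B) * star ((Q t)⁻¹ʳ + B))
    hs (fun t ht ↦ ?_) hx hy
  have hlinear : HasDerivWithinAt (fun τ ↦ (Q τ)⁻¹ʳ + B) (((Q t)⁻¹ʳ + B) * A) s t :=
    ((hasDerivWithinAt_ringInverse_of_riccati (hQ t ht) (hunit t ht)).add_const B).congr_deriv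
      (by rw [add_mul, hBA, add_comm])
  exact hasDerivWithinAt_mul_star_self_of_skew hlinear hA

theorem hasDerivWithinAt_matrix {𝕜 E m n : Type*} [NontriviallyNormedField 𝕜]
    [NormedAddCommGroup E] [NormedSpace 𝕜 E] [Finite m] [Finite n] {M : 𝕜 → Matrix m n E}
    {M' : Matrix m n E} {s : Set 𝕜} {t : 𝕜} :
    HasDerivWithinAt M M' s t ↔ ∀ i j, HasDerivWithinAt (fun τ ↦ M τ i j) (M' i j) s t := by
  have := Fintype.ofFinite m
  have := Fintype.ofFinite n
  exact hasDerivWithinAt_pi.trans (forall_congr' fun _ ↦ hasDerivWithinAt_pi)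

theorem ringInverse_fin_two_of {K : Type*} [Field K] (a b c d : K) :
    !![a, b; c, d]⁻¹ʳ = (a * d - b * c)⁻¹ • !![d, -b; -c, a] := by
  rw [← nonsing_inv_eq_ringInverse, inv_def, det_fin_two_of, adjugate_fin_two_of,
    Ring.inverse_eq_inv']

theorem trace_mul_star_self_fin_two_of (a b c d : ℝ) :
    trace (!![a, b; c, d] * star !![a, b; c, d]) = a ^ 2 + b ^ 2 + c ^ 2 + d ^ 2 := by
  simp only [trace_fin_two, mul_apply, Fin.sum_univ_two, star_apply]
  simp [sq, add_assoc]

theorem trace_mul_star_self_ringInverse_add_skew {a b c d : ℝ} (l : ℝ)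
    (hdet : a * d - b * c ≠ 0) :
    trace ((!![a, b; c, d]⁻¹ʳ + !![0, l⁻¹; -l⁻¹, 0]) *
        star (!![a, b; c, d]⁻¹ʳ + !![0, l⁻¹; -l⁻¹, 0])) =
      (a ^ 2 + d ^ 2 + (b - (a * d - b * c) / l) ^ 2 + (c + (a * d - b * c) / l) ^ 2) /
        (a * d - b * c) ^ 2 := by
  have hentries : !![a, b; c, d]⁻¹ʳ + !![0, l⁻¹; -l⁻¹, 0] =
      !![d / (a * d - b * c), -b / (a * d - b * c) + l⁻¹;
        -c / (a * d - b * c) - l⁻¹, a / (a * d - b * c)] := by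
    rw [ringInverse_fin_two_of]
    simp [inv_mul_eq_div, neg_div, sub_eq_add_neg]
  rw [hentries, trace_mul_star_self_fin_two_of]
  generalize a * d - b * c = D at *
  field_simp
  ring

theorem hasDerivWithinAt_riccati_fin_two {a b c d : ℝ → ℝ} {l t : ℝ} {s : Set ℝ}
    (ha : HasDerivWithinAt a (-(a t) ^ 2 - b t * c t + l * c t) s t)
    (hb : HasDerivWithinAt b (-(a t + d t) * b t + l * d t) s t)
    (hc : HasDerivWithinAt c (-(a t + d t) * c t - l * a t) s t)
    (hd : HasDerivWithinAt d (-(d t) ^ 2 - b t * c t - l * b t) s t) :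
    HasDerivWithinAt (fun τ ↦ !![a τ, b τ; c τ, d τ])
      (-!![a t, b t; c t, d t] ^ 2 - !![0, -l; l, 0] * !![a t, b t; c t, d t]) s t := by
  have hentries : -!![a t, b t; c t, d t] ^ 2 - !![0, -l; l, 0] * !![a t, b t; c t, d t] =
      !![-(a t) ^ 2 - b t * c t + l * c t, -(a t + d t) * b t + l * d t;
        -(a t + d t) * c t - l * a t, -(d t) ^ 2 - b t * c t - l * b t] := by
    ext i j
    fin_cases i <;> fin_cases j <;> simp [sq] <;> ring
  rw [hentries, hasDerivWithinAt_matrix]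
  simpa [Fin.forall_fin_two] using And.intro (And.intro ha hb) (And.intro hc hd)

theorem stmt_10_general (l : ℝ) (hl : l ≠ 0) (J : Set ℝ) (hJ : J.OrdConnected)
    (a b c d : ℝ → ℝ)
    (hsol : ∀ t ∈ J,
      HasDerivWithinAt a (-(a t) ^ 2 - b t * c t + l * c t) J t ∧
      HasDerivWithinAt b (-(a t + d t) * b t + l * d t) J t ∧
      HasDerivWithinAt c (-(a t + d t) * c t - l * a t) J t ∧
      HasDerivWithinAt d (-(d t) ^ 2 - b t * c t - l * b t) J t)
    (hdet : ∀ t ∈ J, a t * d t - b t * c t ≠ 0) :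
    ∀ s ∈ J, ∀ t ∈ J,
      ((a s) ^ 2 + (d s) ^ 2 + (b s - (a s * d s - b s * c s) / l) ^ 2 +
          (c s + (a s * d s - b s * c s) / l) ^ 2) / (a s * d s - b s * c s) ^ 2 =
      ((a t) ^ 2 + (d t) ^ 2 + (b t - (a t * d t - b t * c t) / l) ^ 2 +
          (c t + (a t * d t - b t * c t) / l) ^ 2) / (a t * d t - b t * c t) ^ 2 := by
  have hskew : star !![0, -l; l, 0] = -!![0, -l; l, 0] := by
    ext i j; fin_cases i <;> fin_cases j <;> simp
  have hinv : !![0, l⁻¹; -l⁻¹, 0] * !![0, -l; l, 0] = 1 := by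
    simp [hl, one_fin_two]
  have hriccati : ∀ t ∈ J, HasDerivWithinAt (fun τ ↦ !![a τ, b τ; c τ, d τ])
      (-!![a t, b t; c t, d t] ^ 2 - !![0, -l; l, 0] * !![a t, b t; c t, d t]) J t := fun t ht ↦
    have ⟨ha, hb, hc, hd⟩ := hsol t ht
    hasDerivWithinAt_riccati_fin_two ha hb hc hd
  have hunit : ∀ t ∈ J, IsUnit !![a t, b t; c t, d t] := fun t ht ↦ by
    simpa [isUnit_iff_isUnit_det] using hdet t ht
  intro s hs t ht
  rw [← trace_mul_star_self_ringInverse_add_skew l (hdet s hs),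
    ← trace_mul_star_self_ringInverse_add_skew l (hdet t ht)]
  exact congrArg trace
    (ringInverse_add_mul_star_self_eq_of_riccati hJ.convex hskew hinv hriccati hunit hs ht)

/-- Along any solution of the system (Q)
`a' = −a² − bc + lc`, `b' = −(a+d)b + ld`, `c' = −(a+d)c − la`, `d' = −d² − bc − lb`
with `ad − bc ≠ 0` on an interval `J`, the Lyapunov function
`V = [a² + d² + (b − (ad−bc)/l)² + (c + (ad−bc)/l)²] / (ad−bc)²` is constant. -/
theorem stmt_10 (l : ℝ) (hl : l ≠ 0) (J : Set ℝ) (hJ : J.OrdConnected)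
    (a b c d : ℝ → ℝ)
    (hsol : ∀ t ∈ J,
      HasDerivAt a (-(a t) ^ 2 - b t * c t + l * c t) t ∧
      HasDerivAt b (-(a t + d t) * b t + l * d t) t ∧
      HasDerivAt c (-(a t + d t) * c t - l * a t) t ∧
      HasDerivAt d (-(d t) ^ 2 - b t * c t - l * b t) t)
    (hdet : ∀ t ∈ J, a t * d t - b t * c t ≠ 0) :
    ∀ s ∈ J, ∀ t ∈ J,
      ((a s) ^ 2 + (d s) ^ 2 + (b s - (a s * d s - b s * c s) / l) ^ 2 +
          (c s + (a s * d s - b s * c s) / l) ^ 2) / (a s * d s - b s * c s) ^ 2 =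
      ((a t) ^ 2 + (d t) ^ 2 + (b t - (a t * d t - b t * c t) / l) ^ 2 +
          (c t + (a t * d t - b t * c t) / l) ^ 2) / (a t * d t - b t * c t) ^ 2 := by
  refine stmt_10_general l hl J hJ a b c d (fun t ht ↦ ?_) hdet
  exact (hsol t ht).imp (·.hasDerivWithinAt) <| .imp (·.hasDerivWithinAt) <|
    .imp (·.hasDerivWithinAt) (·.hasDerivWithinAt)
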